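/- Let T ≥ 1 and let x : {1,...,T} × P → [0,1] be such that for each time step t, ∑_{p ∈ P} x(t,p) = 1 (P a finite set of paths). Define the path-change cost N(x) = ∑_{t=2}^{T} ∑_{p ∈ P} max(0, x(t,p) − x(t−1,p)). Then there exists a probability distribution λ over sequences s = (p_1,...,p_T) ∈ P^T such that (i) for every t and p, the probability under λ that s_t = p equals x(t,p), and (ii) the expected number of indices t ∈ {2,...,T} with s_t ≠ s_{t−1} equals N(x). -/

import Mathlib

/-- The time step preceding `t` (clamped at 0). -/
def fpred {T : ℕ} (t : Fin T) : Fin T :=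
  ⟨t.1 - 1, lt_of_le_of_lt (Nat.sub_le _ _) t.2⟩

/-- Number of path changes of a path-sequence `s`: indices `t ≥ 1` with `s t ≠ s (t-1)`. -/
def numChanges {P : Type*} [DecidableEq P] {T : ℕ} (s : Fin T → P) : ℕ :=
  (Finset.univ.filter (fun t : Fin T => 0 < t.1 ∧ s t ≠ s (fpred t))).card

/-- `N(x) = ∑_{t ≥ 1} ∑_p max 0 (x t p - x (t-1) p)`. -/
noncomputable def pathChangeCost {P : Type*} [Fintype P] {T : ℕ} (x : Fin T → P → ℝ) : ℝ :=
  ∑ t : Fin T, ∑ p : P, if 0 < t.1 then max 0 (x t p - x (fpred t) p) else 0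

/-- Maximal coupling of two finite distributions, as a joint mass function: the shared mass stays
in place and the excess of `μ` is spread over the deficit proportionally. -/
theorem exists_maximal_coupling {P : Type*} [Fintype P] [DecidableEq P] (μ ν : P → ℝ)
    (hμ : ∀ p, 0 ≤ μ p) (hν : ∀ p, 0 ≤ ν p) (h : ∑ p, μ p = ∑ p, ν p) :
    ∃ c : P → P → ℝ, (∀ a b, 0 ≤ c a b) ∧ (∀ a, ∑ b, c a b = μ a) ∧ (∀ b, ∑ a, c a b = ν b) ∧
      ∑ a, (μ a - c a a) = ∑ p, max 0 (ν p - μ p) := by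
  have hD : ∑ p, max 0 (μ p - ν p) = ∑ p, max 0 (ν p - μ p) := by
    have : ∑ p, (max 0 (μ p - ν p) - max 0 (ν p - μ p)) = ∑ p, (μ p - ν p) :=
      Finset.sum_congr rfl fun p _ => by grind
    rw [Finset.sum_sub_distrib, Finset.sum_sub_distrib] at this
    linarith
  set D := ∑ p, max 0 (ν p - μ p) with hDdef
  have cancel : ∀ f : P → ℝ, (∀ p, 0 ≤ f p) → ∑ p, f p = D → ∀ p, f p * D / D = f p := by
    intro f hf hfD p
    rcases eq_or_ne D 0 with h0 | h0
    · rw [h0, Finset.sum_eq_zero_iff_of_nonneg fun p _ => hf p] at hfD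
      simp [hfD p (Finset.mem_univ p)]
    · exact mul_div_cancel_right₀ _ h0
  refine ⟨fun a b => (if a = b then min (μ a) (ν a) else 0)
    + max 0 (μ a - ν a) * max 0 (ν b - μ b) / D, fun a b => ?_, fun a => ?_, fun b => ?_, ?_⟩
  · have hD0 : 0 ≤ D := Finset.sum_nonneg fun p _ => le_max_left _ _
    have := le_min (hμ a) (hν a)
    beta_reduce
    split_ifs <;> positivity
  · rw [Finset.sum_add_distrib, ← Finset.sum_div, ← Finset.mul_sum, ← hDdef,
      cancel (fun p => max 0 (μ p - ν p)) (fun p => le_max_left _ _) hD]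
    simp only [Finset.sum_ite_eq, Finset.mem_univ, if_true]
    grind
  · rw [Finset.sum_add_distrib, ← Finset.sum_div, ← Finset.sum_mul, hD, mul_comm D,
      cancel (fun p => max 0 (ν p - μ p)) (fun p => le_max_left _ _) rfl]
    simp only [Finset.sum_ite_eq', Finset.mem_univ, if_true]
    grind
  · rw [← hD]
    refine Finset.sum_congr rfl fun a _ => ?_
    have : max 0 (μ a - ν a) * max 0 (ν a - μ a) = 0 := by
      rcases le_total (μ a) (ν a) with h | h
      · rw [max_eq_left (sub_nonpos.2 h), zero_mul]
      · rw [max_eq_left (a := (0 : ℝ)) (b := ν a - μ a) (sub_nonpos.2 h), mul_zero]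
    simp only [if_true, this, zero_div]
    grind

/-- A Markov kernel transporting `μ` to `ν` whose probability of moving is the total variation
distance between them. -/
theorem exists_maximal_coupling_kernel {P : Type*} [Fintype P] [DecidableEq P] (μ ν : P → ℝ)
    (hμ : ∀ p, 0 ≤ μ p) (hν : ∀ p, 0 ≤ ν p) (h : ∑ p, μ p = ∑ p, ν p) :
    ∃ K : P → P → ℝ, (∀ a b, 0 ≤ K a b) ∧ (∀ a, ∑ b, K a b = 1) ∧
      (∀ b, ∑ a, μ a * K a b = ν b) ∧
      ∑ a, μ a * (1 - K a a) = ∑ p, max 0 (ν p - μ p) := by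
  obtain ⟨c, hc0, hrow, hcol, hdiag⟩ := exists_maximal_coupling μ ν hμ hν h
  have hmul : ∀ a b, μ a * (if μ a = 0 then (if a = b then 1 else 0) else c a b / μ a)
      = c a b := by
    intro a b
    split_ifs with h0 hab
    · have := (Finset.sum_eq_zero_iff_of_nonneg fun b _ => hc0 a b).1 ((hrow a).trans h0) b
        (Finset.mem_univ b)
      simp [h0, this]
    · have := (Finset.sum_eq_zero_iff_of_nonneg fun b _ => hc0 a b).1 ((hrow a).trans h0) b
        (Finset.mem_univ b)
      simp [this]
    · exact mul_div_cancel₀ _ h0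
  refine ⟨fun a b => if μ a = 0 then (if a = b then 1 else 0) else c a b / μ a,
    fun a b => ?_, fun a => ?_, fun b => ?_, ?_⟩
  · have := hc0 a b
    have := hμ a
    beta_reduce
    split_ifs <;> positivity
  · by_cases h0 : μ a = 0
    · simp [h0]
    · simp only [h0, if_false]
      rw [← Finset.sum_div, hrow, div_self h0]
  · simp only [hmul, hcol]
  · rw [← hdiag]
    refine Finset.sum_congr rfl fun a _ => ?_
    rw [mul_sub, hmul, mul_one]

theorem numChanges_eq_sum {P : Type*} [DecidableEq P] {T : ℕ} (s : Fin T → P) :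
    (numChanges s : ℝ) = ∑ t : Fin T, if 0 < t.1 ∧ s t ≠ s (fpred t) then (1 : ℝ) else 0 := by
  simp [numChanges]

theorem fpred_castSucc {n : ℕ} (t : Fin n) : fpred t.castSucc = (fpred t).castSucc := rfl

theorem fpred_last (n : ℕ) : fpred (Fin.last (n + 1)) = (Fin.last n).castSucc := rfl

theorem numChanges_snoc {P : Type*} [DecidableEq P] {n : ℕ} (s : Fin (n + 1) → P) (p : P) :
    (numChanges (Fin.snoc s p : Fin (n + 2) → P) : ℝ)
      = numChanges s + if s (Fin.last n) = p then 0 else 1 := by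
  rw [numChanges_eq_sum, numChanges_eq_sum, Fin.sum_univ_castSucc]
  simp only [fpred_castSucc, fpred_last, Fin.snoc_castSucc (α := fun _ => P),
    Fin.snoc_last (α := fun _ => P), Fin.val_castSucc, Fin.val_last]
  congr 1
  by_cases h : s (Fin.last n) = p <;> simp [h, eq_comm (a := p)]

theorem pathChangeCost_succ {P : Type*} [Fintype P] {n : ℕ} (x : Fin (n + 2) → P → ℝ) :
    pathChangeCost x = pathChangeCost (fun t : Fin (n + 1) => x t.castSucc)
      + ∑ p, max 0 (x (Fin.last (n + 1)) p - x (Fin.last n).castSucc p) := by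
  rw [pathChangeCost, pathChangeCost, Fin.sum_univ_castSucc]
  simp [fpred_castSucc, fpred_last]

theorem sum_snoc {P : Type*} [Fintype P] [DecidableEq P] {n : ℕ} (f : (Fin (n + 1) → P) → ℝ) :
    ∑ s, f s = ∑ s : Fin n → P, ∑ p, f (Fin.snoc s p) := by
  rw [← (Fin.snocEquiv fun _ : Fin (n + 1) => P).sum_comp, Fintype.sum_prod_type_right]
  rfl

/-- Integrating a function of one coordinate against `lam` only involves the marginal. -/
theorem sum_mul_eval_eq {S P : Type*} [Fintype S] [Fintype P] [DecidableEq P]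
    (lam : S → ℝ) (e : S → P) (m : P → ℝ)
    (hm : ∀ p, ∑ s ∈ Finset.univ.filter (fun s => e s = p), lam s = m p) (f : P → ℝ) :
    ∑ s, lam s * f (e s) = ∑ p, m p * f p := by
  rw [← Finset.sum_fiberwise Finset.univ e]
  refine Finset.sum_congr rfl fun p _ => ?_
  rw [← hm, Finset.sum_mul]
  refine Finset.sum_congr rfl fun s hs => ?_
  rw [(Finset.mem_filter.1 hs).2]

theorem exists_pathSequence_distribution {P : Type*} [Fintype P] [DecidableEq P] (n : ℕ)
    (x : Fin (n + 1) → P → ℝ) (hx0 : ∀ t p, 0 ≤ x t p) (hsum : ∀ t, ∑ p, x t p = 1) :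
    ∃ lam : (Fin (n + 1) → P) → ℝ,
      (∀ s, 0 ≤ lam s) ∧
      (∑ s, lam s) = 1 ∧
      (∀ (t : Fin (n + 1)) (p : P),
        ∑ s ∈ Finset.univ.filter (fun s : Fin (n + 1) → P => s t = p), lam s = x t p) ∧
      (∑ s : Fin (n + 1) → P, lam s * (numChanges s : ℝ)) = pathChangeCost x := by
  induction n with
  | zero =>
    have key : ∀ f : (Fin 1 → P) → ℝ, ∑ s, f s = ∑ p, f (fun _ => p) := fun f =>
      ((Equiv.funUnique (Fin 1) P).symm.sum_comp f).symm
    refine ⟨fun s => x 0 (s 0), fun s => hx0 _ _, ?_, fun t p => ?_, ?_⟩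
    · rw [key, hsum]
    · rw [Finset.sum_filter, key, Subsingleton.elim (α := Fin 1) t 0]
      simp
    · simp [numChanges, pathChangeCost]
  | succ n ih =>
    obtain ⟨lam, h0, h1, hmarg, hcost⟩ := ih (fun t => x t.castSucc) (fun _ => hx0 _)
      (fun _ => hsum _)
    obtain ⟨K, hK0, hK1, hKmarg, hKdiag⟩ := exists_maximal_coupling_kernel
      (x (Fin.last n).castSucc) (x (Fin.last (n + 1))) (hx0 _) (hx0 _)
      ((hsum _).trans (hsum _).symm)
    have hlast := sum_mul_eval_eq lam (fun s => s (Fin.last n)) _ (hmarg (Fin.last n))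
    refine ⟨fun s => lam (fun i => s i.castSucc) * K (s (Fin.last n).castSucc) (s (Fin.last _)),
      fun s => mul_nonneg (h0 _) (hK0 _ _), ?_, fun t p => ?_, ?_⟩
    · rw [sum_snoc]
      simp only [Fin.snoc_castSucc (α := fun _ => P), Fin.snoc_last (α := fun _ => P),
        ← Finset.mul_sum, hK1, mul_one, h1]
    · rw [Finset.sum_filter, sum_snoc]
      induction t using Fin.lastCases with
      | last =>
        simp only [Fin.snoc_castSucc (α := fun _ => P), Fin.snoc_last (α := fun _ => P),
          Finset.sum_ite_eq', Finset.mem_univ, if_true]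
        rw [hlast fun a => K a p, hKmarg]
      | cast t =>
        simp only [Fin.snoc_castSucc (α := fun _ => P), Fin.snoc_last (α := fun _ => P)]
        rw [← hmarg t p, Finset.sum_filter]
        refine Finset.sum_congr rfl fun s _ => ?_
        split_ifs
        · rw [← Finset.mul_sum, hK1, mul_one]
        · simp
    · rw [sum_snoc, pathChangeCost_succ, ← hcost, ← hKdiag, ← hlast fun a => 1 - K a a,
        ← Finset.sum_add_distrib]
      refine Finset.sum_congr rfl fun s _ => ?_
      simp only [Fin.snoc_castSucc (α := fun _ => P), Fin.snoc_last (α := fun _ => P),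
        numChanges_snoc]
      have hmove : ∑ p, K (s (Fin.last n)) p * (if s (Fin.last n) = p then (0 : ℝ) else 1)
          = 1 - K (s (Fin.last n)) (s (Fin.last n)) := by
        have hite : ∀ p, K (s (Fin.last n)) p * (if s (Fin.last n) = p then (0 : ℝ) else 1)
            = K (s (Fin.last n)) p - if s (Fin.last n) = p then K (s (Fin.last n)) p else 0 := by
          intro p
          split_ifs <;> simp
        simp only [hite, Finset.sum_sub_distrib, hK1, Finset.sum_ite_eq, Finset.mem_univ, if_true]
      simp only [mul_add, Finset.sum_add_distrib, mul_assoc, ← Finset.mul_sum, hmove,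
        ← Finset.sum_mul, hK1, one_mul]

theorem stmt0 {P : Type*} [Fintype P] [DecidableEq P] {T : ℕ} (hT : 1 ≤ T)
    (x : Fin T → P → ℝ)
    (hx0 : ∀ t p, 0 ≤ x t p) (hx1 : ∀ t p, x t p ≤ 1)
    (hsum : ∀ t, ∑ p, x t p = 1) :
    ∃ lam : (Fin T → P) → ℝ,
      (∀ s, 0 ≤ lam s) ∧
      (∑ s, lam s) = 1 ∧
      (∀ (t : Fin T) (p : P),
        ∑ s ∈ Finset.univ.filter (fun s : Fin T → P => s t = p), lam s = x t p) ∧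
      (∑ s : Fin T → P, lam s * (numChanges s : ℝ)) = pathChangeCost x := by
  obtain ⟨n, rfl⟩ := Nat.exists_eq_add_of_le' hT
  exact exists_pathSequence_distribution n x hx0 hsum
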